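/- Let k ≥ 4 and let z₁, ..., z_k be pairwise distinct points of the unit circle S¹. Then the tuple (z₁, ..., z_k) is cyclically oriented if and only if (z₁, z₂, z₃) is cyclically oriented and the cross ratios [z₂:z₃:z₁:z_j] for j = 4, ..., k are real numbers satisfying 0 < [z₂:z₃:z₁:z₄] < [z₂:z₃:z₁:z₅] < ⋯ < [z₂:z₃:z₁:z_k] < 1. -/

import Mathlib

open Complex

/-- The cross ratio `[z₁:z₂:z₃:z₄] = (z₁-z₃)(z₂-z₄)/((z₂-z₃)(z₁-z₄))`. -/
noncomputable def crossRatio (z₁ z₂ z₃ z₄ : ℂ) : ℂ :=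
  ((z₁ - z₃) * (z₂ - z₄)) / ((z₂ - z₃) * (z₁ - z₄))

/-- A tuple `(z₁, …, z_k)` of points of `S¹` is *cyclically oriented* if it can be written as
`z_j = e^{iθ_j}` with `θ₁ < θ₂ < ⋯ < θ_k < θ₁ + 2π`. -/
def CyclicallyOriented {k : ℕ} (z : Fin k → ℂ) : Prop :=
  ∃ θ : Fin k → ℝ, StrictMono θ ∧ (∀ i j : Fin k, θ j < θ i + 2 * Real.pi) ∧
    ∀ j, z j = Complex.exp (θ j * Complex.I)


noncomputable def ctn (x : ℝ) : ℝ := Real.cos x / Real.sin x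

lemma ctn_lt {x y : ℝ} (hx : 0 < x) (hxy : x < y) (hy : y < Real.pi) : ctn y < ctn x := by
  have h1 := Real.sin_pos_of_pos_of_lt_pi hx (hxy.trans hy)
  have h2 := Real.sin_pos_of_pos_of_lt_pi (hx.trans hxy) hy
  have h3 : 0 < Real.sin (y - x) := Real.sin_pos_of_pos_of_lt_pi (by linarith) (by linarith)
  rw [Real.sin_sub] at h3
  unfold ctn
  rw [div_lt_div_iff₀ h2 h1]
  linarith

lemma lt_of_ctn_lt {x y : ℝ} (hx : x < Real.pi) (hy : 0 < y) (h : ctn y < ctn x) : x < y := by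
  rcases lt_trichotomy x y with h1 | h1 | h1
  · exact h1
  · subst h1; exact absurd h (lt_irrefl _)
  · exact absurd (ctn_lt hy h1 hx) (not_lt.mpr h.le)

lemma sub_I_ne (r : ℝ) : (r : ℂ) - I ≠ 0 := by
  intro h
  have := congrArg Complex.im h
  simp at this

lemma exp_ctn {x : ℝ} (h0 : 0 < x) (h1 : x < Real.pi) :
    Complex.exp ((2 * x : ℝ) * I) = ((ctn x : ℂ) + I) / ((ctn x : ℂ) - I) := by
  have h1 := (Real.sin_pos_of_pos_of_lt_pi h0 h1).ne'
  rw [eq_div_iff (sub_I_ne _)]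
  have hs : Complex.sin x ≠ 0 := by rw [← Complex.ofReal_sin]; exact_mod_cast h1
  unfold ctn
  have e : ((2 * x : ℝ) : ℂ) * I = x * I + x * I := by push_cast; ring
  rw [e, Complex.exp_add, Complex.exp_mul_I]
  push_cast
  have hp := Complex.sin_sq_add_cos_sq x
  have hc : Complex.cos x ^ 2 = 1 - Complex.sin x ^ 2 := by linear_combination hp
  have hI : I ^ 2 = -1 := I_sq
  field_simp
  have : (Complex.cos x + Complex.sin x * I) * (Complex.cos x - Complex.sin x * I) = 1 := by
    linear_combination hp - Complex.sin x ^ 2 * hI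
  linear_combination (Complex.cos x + Complex.sin x * I) * this

lemma cr_formula {c : ℂ} (hc : c ≠ 0) {A B X : ℝ} (hX : A ≠ X) :
    crossRatio (c * ((A + I) / (A - I))) (c * ((B + I) / (B - I))) c
      (c * ((X + I) / (X - I))) = (((B - X) / (A - X) : ℝ) : ℂ) := by
  have hA := sub_I_ne A
  have hB := sub_I_ne B
  have hX' := sub_I_ne X
  have hAX : (A : ℂ) - X ≠ 0 := by
    rw [← Complex.ofReal_sub]; exact_mod_cast sub_ne_zero.mpr hX
  have key : ∀ r s : ℂ, r - I ≠ 0 → s - I ≠ 0 → c * ((r + I) / (r - I)) - c * ((s + I) / (s - I))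
      = c * (2 * I * (s - r)) / ((r - I) * (s - I)) := by
    intro r s hr hs
    field_simp
    ring
  have key2 : ∀ r : ℂ, r - I ≠ 0 → c * ((r + I) / (r - I)) - c = c * (2 * I) / (r - I) := by
    intro r hr
    field_simp
    ring
  unfold crossRatio
  rw [key _ _ hB hX', key _ _ hA hX', key2 _ hA, key2 _ hB]
  push_cast
  have hI := I_ne_zero
  have hXA : (X : ℂ) - A ≠ 0 := by
    intro h; apply hAX; linear_combination -h
  rw [div_eq_div_iff _ hAX]
  · field_simp
    ring
  · simp [hc, hA, hB, hX', hXA]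

lemma exists_x {w : ℂ} (hw : ‖w‖ = 1) :
    ∃ x : ℝ, 0 ≤ x ∧ x < Real.pi ∧ w = Complex.exp ((2 * x : ℝ) * I) := by
  have h : w = Complex.exp (arg w * I) := by
    have := Complex.norm_mul_exp_arg_mul_I w
    rw [hw] at this
    simpa using this.symm
  have h1 := Complex.neg_pi_lt_arg w
  have h2 := Complex.arg_le_pi w
  have hp := Real.pi_pos
  rcases le_or_gt 0 (arg w) with h0 | h0
  · refine ⟨arg w / 2, by linarith, by linarith, ?_⟩
    rw [show 2 * (arg w / 2) = arg w by ring]; exact h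
  · refine ⟨arg w / 2 + Real.pi, by linarith, by linarith, ?_⟩
    rw [show 2 * (arg w / 2 + Real.pi) = arg w + 2 * Real.pi by ring]
    push_cast
    rw [add_mul, Complex.exp_add, Complex.exp_two_pi_mul_I, mul_one]; exact h

lemma exp_inj {x y : ℝ} (hx : 0 ≤ x) (hx' : x < Real.pi) (hy : 0 ≤ y) (hy' : y < Real.pi)
    (h : Complex.exp ((2 * x : ℝ) * I) = Complex.exp ((2 * y : ℝ) * I)) : x = y := by
  rw [Complex.exp_eq_exp_iff_exists_int] at h
  obtain ⟨n, hn⟩ := h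
  have := congrArg Complex.im hn
  simp at this
  have h2 : x - y = n * Real.pi := by linarith
  have hp := Real.pi_pos
  have n1 : (n : ℝ) < 1 := by by_contra hh; push Not at hh; nlinarith
  have n2 : (-1 : ℝ) < n := by by_contra hh; push Not at hh; nlinarith
  have n1' : n < 1 := by exact_mod_cast n1
  have n2' : -1 < n := by exact_mod_cast n2
  have : n = 0 := by omega
  subst this
  simp at h2; linarith

lemma co_iff {n : ℕ} (z : Fin (n + 1) → ℂ) (c : ℂ) (hc : ‖c‖ = 1) (x : Fin (n + 1) → ℝ)
    (x0 : x 0 = 0) (hx : ∀ j, 0 ≤ x j) (hx' : ∀ j, x j < Real.pi)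
    (hz : ∀ j, z j = c * Complex.exp ((2 * x j : ℝ) * I)) :
    CyclicallyOriented z ↔ StrictMono x := by
  constructor
  · rintro ⟨θ, hm, hb, he⟩
    have h0 : c = Complex.exp (θ 0 * I) := by
      rw [← he 0, hz 0, x0]; simp
    have key : ∀ j, x j = (θ j - θ 0) / 2 := by
      intro j
      have m0 : θ 0 ≤ θ j := hm.monotone (Fin.zero_le j)
      have := hb 0 j
      refine exp_inj (hx j) (hx' j) (by linarith) (by linarith) ?_
      have hc0 : c ≠ 0 := by rw [h0]; exact Complex.exp_ne_zero _
      apply mul_left_cancel₀ hc0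
      rw [← hz, he, h0, ← Complex.exp_add]
      congr 1
      push_cast; ring
    intro i j hij
    rw [key, key]
    have := hm hij
    linarith
  · intro hm
    have h : c = Complex.exp (arg c * I) := by
      have := Complex.norm_mul_exp_arg_mul_I c
      rw [hc] at this
      simpa using this.symm
    refine ⟨fun j => arg c + 2 * x j, ?_, ?_, ?_⟩
    · intro i j hij
      have := hm hij
      simp only; linarith
    · intro i j
      have := hx i
      have := hx' j
      simp only; linarith
    · intro j
      rw [hz]
      conv_lhs => rw [h]
      rw [← Complex.exp_add]
      congr 1
      push_cast; ring

/-- **Characterization of cyclic orientation by cross ratios.** For `k ≥ 4` and pairwise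
distinct points `z₀, …, z_{k-1}` of the unit circle (0-indexed), the tuple is cyclically
oriented iff `(z₀, z₁, z₂)` is cyclically oriented and the cross ratios
`[z₁:z₂:z₀:z_{j+3}]` are real numbers forming a strictly increasing chain in `(0,1)`. -/
theorem cyclicallyOriented_iff_crossRatio (k : ℕ) (hk : 4 ≤ k) (z : Fin k → ℂ)
    (hcirc : ∀ j, ‖z j‖ = 1) (hinj : Function.Injective z) :
    CyclicallyOriented z ↔
      (CyclicallyOriented ![z ⟨0, by omega⟩, z ⟨1, by omega⟩, z ⟨2, by omega⟩] ∧
        ∃ lam : Fin (k - 3) → ℝ,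
          (∀ j : Fin (k - 3),
            crossRatio (z ⟨1, by omega⟩) (z ⟨2, by omega⟩) (z ⟨0, by omega⟩)
                (z ⟨(j : ℕ) + 3, by have := j.isLt; omega⟩) = (lam j : ℂ)) ∧
          (∀ j, 0 < lam j) ∧ StrictMono lam ∧ (∀ j, lam j < 1)) := by
  obtain ⟨n, rfl⟩ : ∃ n, k = n + 3 + 1 := ⟨k - 4, by omega⟩
  have hc0 : z 0 ≠ 0 := by
    intro h
    have := hcirc 0
    rw [h] at this
    simp at this
  have hex : ∀ j, ∃ x : ℝ, 0 ≤ x ∧ x < Real.pi ∧ z j / z 0 = Complex.exp ((2 * x : ℝ) * I) :=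
    fun j => exists_x (by rw [norm_div, hcirc, hcirc]; norm_num)
  choose x hx hx' hzx using hex
  have hz : ∀ j, z j = z 0 * Complex.exp ((2 * x j : ℝ) * I) := by
    intro j
    rw [← hzx]
    field_simp
  have x0 : x 0 = 0 := by
    refine exp_inj (hx 0) (hx' 0) le_rfl Real.pi_pos ?_
    rw [← hzx, div_self hc0]; simp
  have xinj : ∀ i j, x i = x j → i = j := by
    intro i j h
    apply hinj
    rw [hz i, hz j, h]
  have xpos : ∀ j, j ≠ 0 → 0 < x j := by
    intro j hj
    refine lt_of_le_of_ne (hx j) ?_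
    intro h
    exact hj (xinj _ _ (by rw [x0, ← h]))
  have hzc : ∀ j, j ≠ 0 → z j = z 0 * (((ctn (x j) : ℂ) + I) / ((ctn (x j) : ℂ) - I)) := by
    intro j hj
    rw [← exp_ctn (xpos j hj) (hx' j)]; exact hz j
  have cinj : ∀ i j, i ≠ 0 → j ≠ 0 → i ≠ j → ctn (x i) ≠ ctn (x j) := by
    intro i j hi hj hij h
    rcases lt_trichotomy (x i) (x j) with h1 | h1 | h1
    · exact absurd h (ctn_lt (xpos i hi) h1 (hx' j)).ne'
    · exact hij (xinj _ _ h1)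
    · exact absurd h (ctn_lt (xpos j hj) h1 (hx' i)).ne
  have fne : ∀ (m : ℕ) (hm : m < n + 3 + 1), 0 < m → (⟨m, hm⟩ : Fin (n + 3 + 1)) ≠ 0 := by
    intro m hm h0 h
    have := congrArg Fin.val h
    simp at this
    omega
  have n1 := fne 1 (by omega) (by omega)
  have n2 := fne 2 (by omega) (by omega)
  set A := ctn (x ⟨1, by omega⟩) with hA
  set B := ctn (x ⟨2, by omega⟩) with hB
  have hcr : ∀ j : Fin (n + 3 + 1 - 3),
      crossRatio (z ⟨1, by omega⟩) (z ⟨2, by omega⟩) (z ⟨0, by omega⟩)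
        (z ⟨(j : ℕ) + 3, by have := j.isLt; omega⟩) =
      (((B - ctn (x ⟨(j : ℕ) + 3, by have := j.isLt; omega⟩)) /
        (A - ctn (x ⟨(j : ℕ) + 3, by have := j.isLt; omega⟩)) : ℝ) : ℂ) := by
    intro j
    have n3 := fne (j + 3) (by have := j.isLt; omega) (by omega)
    rw [hzc _ n1, hzc _ n2, hzc _ n3]
    refine cr_formula hc0 (cinj _ _ n1 n3 ?_)
    intro h
    have := congrArg Fin.val h
    simp at this
  rw [co_iff z (z 0) (hcirc 0) x x0 hx hx' hz]
  rw [co_iff _ (z 0) (hcirc 0) ![x ⟨0, by omega⟩, x ⟨1, by omega⟩, x ⟨2, by omega⟩] x0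
    (by intro j; fin_cases j <;> exact hx _) (by intro j; fin_cases j <;> exact hx' _)
    (by intro j; fin_cases j <;> exact hz _)]
  constructor
  · intro hm
    have hlt : ∀ (a b : ℕ) (ha : a < n + 3 + 1) (hb : b < n + 3 + 1), 0 < a → a < b →
        ctn (x ⟨b, hb⟩) < ctn (x ⟨a, ha⟩) := fun a b ha hb h0 hab =>
      ctn_lt (xpos _ (fne a ha h0)) (hm (Fin.mk_lt_mk.mpr hab)) (hx' _)
    have hBA : B < A := hlt 1 2 _ _ (by omega) (by omega)
    refine ⟨?_, _, hcr, ?_, ?_, ?_⟩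
    · rw [Fin.strictMono_iff_lt_succ]
      intro i
      fin_cases i
      · exact hm (Fin.mk_lt_mk.mpr (by omega))
      · exact hm (Fin.mk_lt_mk.mpr (by omega))
    · intro j
      have := hlt 2 (j + 3) (by omega) (by have := j.isLt; omega) (by omega) (by omega)
      exact div_pos (by linarith) (by linarith)
    · intro i j hij
      have h1 := hlt 2 (i + 3) (by omega) (by have := i.isLt; omega) (by omega) (by omega)
      have h2 := hlt 2 (j + 3) (by omega) (by have := j.isLt; omega) (by omega) (by omega)
      have h3 := hlt (i + 3) (j + 3) (by have := i.isLt; omega) (by have := j.isLt; omega)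
        (by omega) (by have : (i : ℕ) < j := hij; omega)
      simp only
      rw [div_lt_div_iff₀ (by linarith) (by linarith)]
      nlinarith
    · intro j
      have := hlt 2 (j + 3) (by omega) (by have := j.isLt; omega) (by omega) (by omega)
      rw [div_lt_one (by linarith)]
      linarith
  · rintro ⟨h3, lam, hl, hpos, hmono, hone⟩
    have h12 : x ⟨1, by omega⟩ < x ⟨2, by omega⟩ := h3 (show (1 : Fin 3) < 2 by decide)
    have hBA : B < A := ctn_lt (xpos _ n1) h12 (hx' _)
    have hlam : ∀ j : Fin (n + 3 + 1 - 3), lam j =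
      (B - ctn (x ⟨(j : ℕ) + 3, by have := j.isLt; omega⟩)) /
        (A - ctn (x ⟨(j : ℕ) + 3, by have := j.isLt; omega⟩)) := by
      intro j
      have := (hl j).symm.trans (hcr j)
      exact_mod_cast this
    have hXB : ∀ j : Fin (n + 3 + 1 - 3),
        ctn (x ⟨(j : ℕ) + 3, by have := j.isLt; omega⟩) < B := by
      intro j
      have p := hpos j
      have o := hone j
      rw [hlam] at p o
      generalize ctn (x ⟨(j : ℕ) + 3, by have := j.isLt; omega⟩) = X at p o ⊢
      rcases lt_trichotomy A X with h | h | h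
      · rw [div_lt_one_of_neg (by linarith)] at o
        linarith
      · rw [h] at p; simp at p
      · rw [div_pos_iff_of_pos_right (by linarith)] at p
        linarith
    have h2 : ∀ j : Fin (n + 3 + 1 - 3),
        x ⟨2, by omega⟩ < x ⟨(j : ℕ) + 3, by have := j.isLt; omega⟩ := fun j =>
      lt_of_ctn_lt (hx' _) (xpos _ (fne _ _ (by omega))) (hXB j)
    have h33 : ∀ i j : Fin (n + 3 + 1 - 3), i < j →
        x ⟨(i : ℕ) + 3, by have := i.isLt; omega⟩ <
          x ⟨(j : ℕ) + 3, by have := j.isLt; omega⟩ := by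
      intro i j hij
      refine lt_of_ctn_lt (hx' _) (xpos _ (fne _ _ (by omega))) ?_
      have hm := hmono hij
      have hi := hXB i
      have hj := hXB j
      rw [hlam, hlam, div_lt_div_iff₀ (by linarith) (by linarith)] at hm
      by_contra hcon
      push Not at hcon
      nlinarith
    rw [Fin.strictMono_iff_lt_succ]
    rintro ⟨m, hm⟩
    rcases m with _ | _ | _ | m
    · have := xpos _ n1
      rw [← x0] at this
      exact this
    · exact h12
    · exact h2 ⟨0, by omega⟩
    · exact h33 ⟨m, by omega⟩ ⟨m + 1, by omega⟩ (Fin.mk_lt_mk.mpr (by omega))
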